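/- arXiv:1608.05596 — 2 statements merged into one kernel-verified Lean document; each statement's English description precedes it below -/
import Mathlib

section
/- Let α be irrational, g : 𝕋 → ℝ a C¹ function with ∫_𝕋 g dm_𝕋 = 0, c ∈ ℝ, and f(x) = g(x) + {x} + c with f > 0. Set L = min{1, inf_𝕋 f} and M = max{1, sup_𝕋 f}, and fix β ∈ (0,1]. Then there exists δ₀ > 0 such that for all x, y ∈ 𝕋 with 0 < ‖x−y‖ < δ₀ there exists an integer interval J_{x,y} ⊂ ℤ such that: (i) 0 ∈ J_{x,y} ⊂ [−β/(100M‖x−y‖), β/(100M‖x−y‖)]; (ii) for every n ∈ (10M/L)·J_{x,y} one has |f^{(n)}(x) − f^{(n)}(y)| < 50M/L; (iii) there exists an integer interval U_{x,y} ⊂ J_{x,y} with |U_{x,y}| > |J_{x,y}|/10 such that for every n ∈ U_{x,y}, |f^{(n)}(x) − f^{(n)}(y)| > βL/(10⁶M²). -/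
/-! Write `x = y + t` modulo `ℤ` with `0 < t` small; the case of negative displacement follows by
exchanging `x` and `y`. A hit is a time `i` at which `y + i α` lies in the arc `[1 - t, 1)`, where
adding `t` crosses the discontinuity of the fractional part. By `posSum_sub`, after `n ≥ 0` steps the
two cocycles differ by `n t - W(n)` plus the contribution of `g`, where `W(n)` counts hits. The
contribution of `g` is negligible (`smooth_part`): `g'` is continuous with mean zero, so its Birkhoff
sums are `o(n)` uniformly. Backward time is forward time for the rotation by `-α`.

Let `N = β / (100 M t)`, so that `n t ≤ 1/100` for `n ≤ N`, and let `q` be the least positive integer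
with `‖q α‖ < t`; consecutive hits are at least `q` apart. This gives three ways to choose `J` on one
side of `0`. If there is no hit up to `N`, the drift `n t` alone is seen (`oneSided_of_no_hit`). If
`J` has length `2b ≤ 4q`, the enlarged interval `(10M/L) J` contains few hits (`far_bound`); then
either a hit in the first half of `J` pushes the difference close to a nonzero integer on the second
half (`oneSided_of_hit`), or there is none and, if `2b` is about `N`, the drift is seen on the
second quarter (`oneSided_of_half`).

If all of these fail on both sides, then `4q ≤ N`, there are hits on both sides within distance `N`,
and none in `[-2q, 2q)`. A gap between hits that is so long compared with `q` has length of order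
`1 / t` by the determinant argument of `hit_gap`, which exceeds `2N`; this is a contradiction
(`two_sided`, `dichotomy`). -/

/-- Distance of a real number to the nearest integer. -/
noncomputable def normT (x : ℝ) : ℝ := |x - round x|

/-- The Birkhoff cocycle `f^{(n)}(x)` over the rotation by `α`, for `n ∈ ℤ`. -/
noncomputable def birkhoff (α : ℝ) (f : ℝ → ℝ) (n : ℤ) (x : ℝ) : ℝ :=
  if 0 ≤ n then ∑ i ∈ Finset.range n.toNat, f (x + (i : ℕ) * α)
  else -∑ i ∈ Finset.range (-n).toNat, f (x + ((n : ℝ) + (i : ℕ)) * α)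

/-! ### Birkhoff sums of continuous functions -/

/-- Trigonometric polynomials have bounded centred Birkhoff sums: on a nonconstant character the
sum is geometric with ratio `≠ 1`, since `α` is irrational. -/
theorem trig_birkhoff (α : ℝ) (hα : Irrational α) (p : C(UnitAddCircle, ℂ))
    (hp : p ∈ Submodule.span ℂ (Set.range (fourier (T := (1:ℝ))))) :
    ∃ C : ℝ, ∀ (n : ℕ) (x : ℝ),
      ‖∑ i ∈ Finset.range n, p ((x + i * α : ℝ) : UnitAddCircle) - n * ∫ z, p z‖ ≤ C := by
  have hint : ∀ φ : C(UnitAddCircle, ℂ), MeasureTheory.Integrable (fun z => φ z) :=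
    fun φ => φ.continuous.integrable_of_hasCompactSupport
      (HasCompactSupport.of_compactSpace _)
  induction hp using Submodule.span_induction with
  | mem p h =>
    obtain ⟨k, rfl⟩ := h
    rcases eq_or_ne k 0 with rfl | hk
    · exact ⟨0, fun n x => by simp [MeasureTheory.measureReal_def]⟩
    · have h0 : ∫ z : UnitAddCircle, fourier k z = 0 :=
        MeasureTheory.integral_eq_zero_of_add_right_eq_neg
          (fourier_add_half_inv_index hk one_pos)
      set w : ℂ := fourier k ((α : ℝ) : UnitAddCircle) with hw
      have hnorm : ∀ z : UnitAddCircle, ‖fourier k z‖ = 1 := fun z => by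
        rw [fourier_apply]; exact Circle.norm_coe _
      have hw1 : w ≠ 1 := by
        intro h
        rw [hw, fourier_coe_apply, Complex.exp_eq_one_iff] at h
        obtain ⟨m, hm⟩ := h
        have hpi : (2 * (Real.pi : ℂ) * Complex.I) ≠ 0 := Complex.two_pi_I_ne_zero
        have h2 : (k : ℂ) * α = m := by
          have : (2 * (Real.pi : ℂ) * Complex.I) * ((k : ℂ) * α - m) = 0 := by
            simp at hm
            linear_combination hm
          simpa [hpi, sub_eq_zero] using this
        have h3 : (k : ℝ) * α = m := by exact_mod_cast h2
        exact (hα.intCast_mul hk).ne_int m h3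
      refine ⟨2 / ‖w - 1‖, fun n x => ?_⟩
      have hterm : ∀ i : ℕ, fourier k ((x + i * α : ℝ) : UnitAddCircle)
          = fourier k (x : UnitAddCircle) * w ^ i := by
        intro i
        rw [hw, fourier_coe_apply, fourier_coe_apply, fourier_coe_apply, ← Complex.exp_nat_mul,
          ← Complex.exp_add]
        congr 1
        push_cast
        ring
      rw [h0, mul_zero, sub_zero, Finset.sum_congr rfl (fun i _ => hterm i), ← Finset.mul_sum,
        geom_sum_eq hw1, norm_mul, hnorm, one_mul, norm_div]
      gcongr
      calc ‖w ^ n - 1‖ ≤ ‖w ^ n‖ + ‖(1:ℂ)‖ := norm_sub_le _ _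
        _ = 2 := by rw [norm_pow, hnorm]; norm_num
  | zero => exact ⟨0, fun n x => by simp⟩
  | add p q _ _ hp hq =>
    obtain ⟨C, hC⟩ := hp
    obtain ⟨D, hD⟩ := hq
    refine ⟨C + D, fun n x => ?_⟩
    refine le_trans (le_of_eq ?_) ((norm_add_le _ _).trans (add_le_add (hC n x) (hD n x)))
    simp only [ContinuousMap.add_apply]
    rw [MeasureTheory.integral_add (hint p) (hint q), Finset.sum_add_distrib]
    congr 1
    ring
  | smul a p _ hp =>
    obtain ⟨C, hC⟩ := hp
    refine ⟨‖a‖ * C, fun n x => ?_⟩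
    refine le_trans (le_of_eq ?_) (mul_le_mul_of_nonneg_left (hC n x) (norm_nonneg a))
    simp only [ContinuousMap.smul_apply, smul_eq_mul]
    rw [MeasureTheory.integral_const_mul, ← Finset.mul_sum, ← norm_mul]
    congr 1
    ring

/-- Unique ergodicity of the rotation, quantified: the Birkhoff sums of a continuous mean-zero
function are at most `ε n + C`, uniformly in the base point. -/
theorem unif_birkhoff (α : ℝ) (hα : Irrational α) (h : ℝ → ℝ) (hper : Function.Periodic h 1)
    (hc : Continuous h) (hint : ∫ x in (0:ℝ)..1, h x = 0) (ε : ℝ) (hε : 0 < ε) :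
    ∃ C : ℝ, 0 ≤ C ∧ ∀ (n : ℕ) (x : ℝ), |∑ i ∈ Finset.range n, h (x + i * α)| ≤ ε * n + C := by
  let φ : C(UnitAddCircle, ℂ) := ⟨fun z => ((hper.lift z : ℝ) : ℂ),
    Complex.continuous_ofReal.comp (by
      apply Continuous.quotient_lift hc)⟩
  have hφ : ∀ x : ℝ, φ (x : UnitAddCircle) = (h x : ℂ) := fun x => rfl
  have hφ0 : ∫ z, φ z = 0 := by
    rw [← UnitAddCircle.intervalIntegral_preimage 0 (fun z => φ z)]
    simp only [hφ, zero_add]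
    rw [intervalIntegral.integral_ofReal, hint]
    simp
  have hmem : φ ∈ closure
      (Submodule.span ℂ (Set.range (fourier (T := (1:ℝ)))) : Set C(UnitAddCircle, ℂ)) := by
    rw [← Submodule.topologicalClosure_coe, span_fourier_closure_eq_top]
    trivial
  obtain ⟨p, hp, hdist⟩ := Metric.mem_closure_iff.1 hmem (ε / 2) (by positivity)
  have hpt : ∀ z, ‖φ z - p z‖ ≤ ε / 2 := fun z => by
    have := ContinuousMap.dist_apply_le_dist (f := φ) (g := p) z
    rw [dist_eq_norm] at this
    linarith
  obtain ⟨C, hC⟩ := trig_birkhoff α hα p hp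
  have hi : ∀ φ : C(UnitAddCircle, ℂ), MeasureTheory.Integrable (fun z => φ z) :=
    fun φ => φ.continuous.integrable_of_hasCompactSupport
      (HasCompactSupport.of_compactSpace _)
  have hpint : ‖∫ z, p z‖ ≤ ε / 2 := by
    have h1 : ∫ z, (φ z - p z) = - ∫ z, p z := by
      rw [MeasureTheory.integral_sub (hi φ) (hi p), hφ0, zero_sub]
    rw [← norm_neg, ← h1]
    have := MeasureTheory.norm_integral_le_of_norm_le_const
      (μ := (MeasureTheory.volume : MeasureTheory.Measure UnitAddCircle))
      (f := fun z => φ z - p z) (Filter.Eventually.of_forall hpt)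
    simpa [MeasureTheory.measureReal_def] using this
  refine ⟨C, le_trans (norm_nonneg _) (hC 0 0), fun n x => ?_⟩
  have e1 : ((∑ i ∈ Finset.range n, h (x + i * α) : ℝ) : ℂ)
      = ∑ i ∈ Finset.range n, (φ ((x + i * α : ℝ) : UnitAddCircle)
          - p ((x + i * α : ℝ) : UnitAddCircle))
        + (∑ i ∈ Finset.range n, p ((x + i * α : ℝ) : UnitAddCircle) - n * ∫ z, p z)
        + n * ∫ z, p z := by
    rw [Finset.sum_sub_distrib]
    simp only [hφ]
    push_cast
    ring
  have e2 : ‖∑ i ∈ Finset.range n, (φ ((x + i * α : ℝ) : UnitAddCircle)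
          - p ((x + i * α : ℝ) : UnitAddCircle))‖ ≤ n * (ε / 2) := by
    refine (norm_sum_le_of_le _ (fun i _ => hpt _)).trans ?_
    simp
  have e3 : ‖(n : ℂ) * ∫ z, p z‖ ≤ n * (ε / 2) := by
    rw [norm_mul, Complex.norm_natCast]
    gcongr
  rw [← Real.norm_eq_abs, ← Complex.norm_real, e1]
  refine (norm_add₃_le).trans ?_
  linarith [hC n x]

/-- The mean value theorem together with the uniform bound on the Birkhoff sums of `g'`: the smooth
part of the roof contributes only `t (ε n + C)` to the difference of two orbits at distance `t`. -/
theorem smooth_part (α : ℝ) (hα : Irrational α) (g : ℝ → ℝ) (hper : Function.Periodic g 1)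
    (hg : ContDiff ℝ 1 g) (ε : ℝ) (hε : 0 < ε) :
    ∃ C : ℝ, 0 ≤ C ∧ ∀ (n : ℕ) (x y t : ℝ) (k : ℤ), 0 ≤ t → x = y + t + k →
      |∑ i ∈ Finset.range n, g (x + i * α) - ∑ i ∈ Finset.range n, g (y + i * α)|
        ≤ t * (ε * n + C) := by
  have hd : Differentiable ℝ g := hg.differentiable one_ne_zero
  have hdc : Continuous (deriv g) := hg.continuous_deriv le_rfl
  have hdp : Function.Periodic (deriv g) 1 := fun x => by
    rw [← deriv_comp_add_const]
    congr 1
    exact funext hper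
  have hd0 : ∫ x in (0:ℝ)..1, deriv g x = 0 := by
    rw [intervalIntegral.integral_deriv_eq_sub (fun x _ => hd x) (hdc.intervalIntegrable _ _)]
    have := hper 0
    rw [zero_add] at this
    linarith
  obtain ⟨C, hC0, hC⟩ := unif_birkhoff α hα (deriv g) hdp hdc hd0 ε hε
  refine ⟨C, hC0, fun n x y t k ht hx => ?_⟩
  have hx' : ∀ i : ℕ, g (x + i * α) = g (y + t + i * α) := fun i => by
    rw [hx, show y + t + k + i * α = y + t + i * α + k * 1 by ring]
    exact hper.int_mul k _
  simp only [hx']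
  have hda : ∀ z : ℝ, HasDerivAt (fun z => ∑ i ∈ Finset.range n, g (z + i * α))
      (∑ i ∈ Finset.range n, deriv g (z + i * α)) z := fun z =>
    HasDerivAt.fun_sum fun i _ => (hd _).hasDerivAt.comp_add_const z _
  have := Convex.norm_image_sub_le_of_norm_deriv_le (𝕜 := ℝ) (s := Set.univ)
    (f := fun z => ∑ i ∈ Finset.range n, g (z + i * α)) (C := ε * n + C) (x := y) (y := y + t)
    (fun z _ => (hda z).differentiableAt) (fun z _ => by
      rw [(hda z).deriv]; exact hC n z) convex_univ trivial trivial
  rw [Real.norm_eq_abs, Real.norm_eq_abs, add_sub_cancel_left, abs_of_nonneg ht] at this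
  linarith

/-! ### Combinatorics of hits -/

open Classical in
/-- The number of `i < m` at which the predicate `H` holds. -/
noncomputable def hitCount (H : ℕ → Prop) (m : ℕ) : ℕ := ((Finset.range m).filter H).card

/-- Elements of `H` that are pairwise at least `q` apart lie in different blocks of length `q`. -/
theorem hitCount_le (H : ℕ → Prop) (q : ℕ) (hq : 0 < q)
    (hsep : ∀ i j, H i → H j → i < j → i + q ≤ j) (m : ℕ) : hitCount H m ≤ m / q + 1 := by
  classical
  rw [← Finset.card_range (m / q + 1)]
  refine Finset.card_le_card_of_injOn (fun i => i / q) ?_ ?_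
  · intro i hi
    have hi' := (Finset.mem_filter.1 hi).1
    rw [Finset.mem_range] at hi'
    simp only [Finset.coe_range, Set.mem_Iio]
    exact Nat.lt_succ_of_le (Nat.div_le_div_right hi'.le)
  · intro i hi j hj hij
    have hi' := (Finset.mem_filter.1 hi).2
    have hj' := (Finset.mem_filter.1 hj).2
    simp only at hij
    have key : ∀ i j, H i → H j → i / q = j / q → ¬ i < j := by
      intro i j hi hj hij hlt
      have h1 := hsep i j hi hj hlt
      have h2 := Nat.div_le_div_right (c := q) h1
      rw [Nat.add_div_right _ hq] at h2
      omega
    have h1 := key i j hi' hj' hij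
    have h2 := key j i hj' hi' hij.symm
    omega

theorem hitCount_eq_zero (H : ℕ → Prop) (m : ℕ) (h : ∀ i < m, ¬ H i) : hitCount H m = 0 := by
  classical
  rw [hitCount, Finset.card_eq_zero, Finset.filter_eq_empty_iff]
  exact fun i hi => h i (Finset.mem_range.1 hi)

theorem one_le_hitCount (H : ℕ → Prop) (m i : ℕ) (him : i < m) (h : H i) : 1 ≤ hitCount H m := by
  classical
  exact Finset.card_pos.2 ⟨i, Finset.mem_filter.2 ⟨Finset.mem_range.2 him, h⟩⟩

/-- The conclusion of the theorem for the interval `J = [0, b]` and the difference `D n` of the two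
Birkhoff sums at time `n`; here `N` is the maximal length of `J`, `K` stands for `M / L`, `κ` is the
lower bound on `U = [u, v]`. -/
def OneSided (D : ℕ → ℝ) (N K κ : ℝ) : Prop :=
  ∃ b : ℕ, (b : ℝ) ≤ N ∧ (∀ m : ℕ, (m : ℝ) ≤ 10 * K * b → |D m| < 50 * K) ∧
    ∃ u v : ℕ, u ≤ v ∧ v ≤ b ∧ ((b : ℝ) + 1) / 10 < (v : ℝ) - u + 1 ∧
      ∀ m, u ≤ m → m ≤ v → κ < |D m|

/-- `D` is, up to an error `κ` on the range `[0, 10 K N]`, the linear drift `m t` minus the number of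
hits, with the relations between the constants that hold for `K = M / L`, `N = β / (100 M t)` and
`κ = β L / (10⁶ M²)`. -/
structure Approx (D : ℕ → ℝ) (H : ℕ → Prop) (t N K κ : ℝ) : Prop where
  close : ∀ m : ℕ, (m : ℝ) ≤ 10 * K * N → |D m - (m * t - hitCount H m)| ≤ κ
  one_le_K : 1 ≤ K
  t_pos : 0 < t
  N_nonneg : 0 ≤ N
  Nt_le : N * t ≤ 1 / 100
  κ_le : κ ≤ 1 / 1000
  t_le : t ≤ κ
  Nt_eq : N * t = 10 ^ 4 * κ * K

/-- Without hits up to time `N`, the drift alone works on `J = [0, N / (10 K)]`: the enlarged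
interval `10 K · J` stays within `[0, N]`. -/
theorem oneSided_of_no_hit {D : ℕ → ℝ} {H : ℕ → Prop} {t N K κ : ℝ} (h : Approx D H t N K κ)
    (hno : ∀ i : ℕ, (i : ℝ) ≤ N → ¬ H i) : OneSided D N K κ := by
  obtain ⟨hD, hK, ht, hN0, hNt, hκ, htκ, hbig⟩ := h
  have hK0 : 0 < K := by linarith
  set B := N / (10 * K) with hB
  have hBN : 10 * K * B = N := by rw [hB]; field_simp
  have hB0 : 0 ≤ B := by positivity
  have hBle : B ≤ N := by nlinarith
  have hBt : B * t = 1000 * κ := by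
    have : K * (B * t) = K * (1000 * κ) := by
      linear_combination (t / 10) * hBN + hbig / 10
    exact mul_left_cancel₀ hK0.ne' this
  have hfl := Nat.floor_le hB0
  have hfl2 := Nat.lt_floor_add_one B
  have hW : ∀ m : ℕ, (m : ℝ) ≤ N → |D m - m * t| ≤ κ := by
    intro m hm
    have := hD m (by nlinarith)
    rwa [hitCount_eq_zero H m (fun i hi => hno i (le_trans (by exact_mod_cast hi.le) hm)),
      Nat.cast_zero, sub_zero] at this
  have hu1 : ((⌊B⌋₊ / 2 : ℕ) : ℝ) * 2 ≤ ⌊B⌋₊ := by exact_mod_cast Nat.div_mul_le_self _ _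
  have hu2 : ((⌊B⌋₊ : ℕ) : ℝ) ≤ 2 * ((⌊B⌋₊ / 2 : ℕ) : ℝ) + 1 := by
    exact_mod_cast (by omega : ⌊B⌋₊ ≤ 2 * (⌊B⌋₊ / 2) + 1)
  have hmt : ∀ m : ℕ, (m : ℝ) ≤ N → 0 ≤ (m : ℝ) * t ∧ (m : ℝ) * t ≤ 1 / 100 := fun m hm =>
    ⟨by positivity, (mul_le_mul_of_nonneg_right hm ht.le).trans hNt⟩
  refine ⟨⌊B⌋₊, by linarith, fun m hm => ?_, ⌊B⌋₊ / 2, ⌊B⌋₊, Nat.div_le_self _ _, le_rfl, ?_,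
    fun m hm1 hm2 => ?_⟩
  · have hmN : (m : ℝ) ≤ N := by nlinarith
    have h1 := abs_le.1 (hW m hmN)
    have h2 := hmt m hmN
    rw [abs_lt]
    constructor <;> linarith [h1.1, h1.2, h2.1, h2.2]
  · have : (0 : ℝ) ≤ ⌊B⌋₊ := by positivity
    linarith
  · have hm2' : (m : ℝ) ≤ ⌊B⌋₊ := by exact_mod_cast hm2
    have hm1' : ((⌊B⌋₊ / 2 : ℕ) : ℝ) ≤ m := by exact_mod_cast hm1
    have h1 := abs_le.1 (hW m (by linarith))
    have h2 : (B / 2 - 1) * t ≤ m * t := mul_le_mul_of_nonneg_right (by linarith) ht.le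
    refine lt_of_lt_of_le ?_ (le_abs_self _)
    nlinarith [h1.1]

/-- On an interval of length at most `4 q`, with hits at least `q` apart, the enlarged interval sees at
most `40 K + 1` hits. -/
theorem far_bound {D : ℕ → ℝ} {H : ℕ → Prop} {t N K κ : ℝ} (h : Approx D H t N K κ)
    {q : ℕ} (hq : 0 < q) (hsep : ∀ i j, H i → H j → i < j → i + q ≤ j) {b : ℕ}
    (hb : b ≤ 4 * q) (hbN : (b : ℝ) ≤ N) (m : ℕ) (hm : (m : ℝ) ≤ 10 * K * b) :
    |D m| < 50 * K := by
  obtain ⟨hD, hK, ht, hN0, hNt, hκ, htκ, hbig⟩ := h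
  have hmN : (m : ℝ) ≤ 10 * K * N := hm.trans (by gcongr)
  have h1 := abs_le.1 (hD m hmN)
  have hq' : (0 : ℝ) < q := by exact_mod_cast hq
  have hW : (hitCount H m : ℝ) ≤ 40 * K + 1 := by
    have h2 : (hitCount H m : ℝ) ≤ ((m / q : ℕ) : ℝ) + 1 := by
      exact_mod_cast hitCount_le H q hq hsep m
    have h3 : ((m / q : ℕ) : ℝ) ≤ (m : ℝ) / q := Nat.cast_div_le
    have h4 : (m : ℝ) / q ≤ 40 * K := by
      rw [div_le_iff₀ hq']
      have : (b : ℝ) ≤ 4 * q := by exact_mod_cast hb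
      nlinarith
    linarith
  have hW0 : (0 : ℝ) ≤ hitCount H m := by positivity
  have hmt0 : 0 ≤ (m : ℝ) * t := by positivity
  have hmt : (m : ℝ) * t ≤ K / 10 := by nlinarith [mul_le_mul_of_nonneg_right hmN ht.le]
  rw [abs_lt]
  constructor <;> linarith [h1.1, h1.2]

/-- A hit in the first half of `J = [0, 2b]` makes the difference nearly a nonzero integer on the
second half. -/
theorem oneSided_of_hit {D : ℕ → ℝ} {H : ℕ → Prop} {t N K κ : ℝ} (h : Approx D H t N K κ)
    {q : ℕ} (hq : 0 < q) (hsep : ∀ i j, H i → H j → i < j → i + q ≤ j) {b : ℕ}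
    (hb : b ≤ 2 * q) (hbN : 2 * (b : ℝ) ≤ N) {i : ℕ} (hib : i < b) (hi : H i) :
    OneSided D N K κ := by
  have hbN' : ((2 * b : ℕ) : ℝ) ≤ N := by push_cast; exact hbN
  refine ⟨2 * b, hbN', far_bound h hq hsep (by omega) hbN', b, 2 * b, by omega, le_rfl, ?_,
    fun m hm1 hm2 => ?_⟩
  · have : (0 : ℝ) ≤ b := by positivity
    push_cast
    linarith
  · obtain ⟨hD, hK, ht, hN0, hNt, hκ, htκ, hbig⟩ := h
    have hm2' : (m : ℝ) ≤ N := le_trans (by exact_mod_cast hm2) hbN'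
    have h1 := abs_le.1 (hD m (by nlinarith))
    have h2 : (1 : ℝ) ≤ hitCount H m := by
      exact_mod_cast one_le_hitCount H m i (by omega) hi
    have h3 := (mul_le_mul_of_nonneg_right hm2' ht.le).trans hNt
    refine lt_of_lt_of_le ?_ (neg_le_abs _)
    linarith [h1.2]

/-- If `2b` is essentially `N` and the first half of `J = [0, 2b]` has no hits, the drift is visible
on the second quarter of `J`. -/
theorem oneSided_of_half {D : ℕ → ℝ} {H : ℕ → Prop} {t N K κ : ℝ} (h : Approx D H t N K κ)
    {q : ℕ} (hq : 0 < q) (hsep : ∀ i j, H i → H j → i < j → i + q ≤ j) {b : ℕ}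
    (hb : b ≤ 2 * q) (hbN : 2 * (b : ℝ) ≤ N) (hNb : N < 2 * b + 2)
    (hno : ∀ i < b, ¬ H i) :
    OneSided D N K κ := by
  have hbN' : ((2 * b : ℕ) : ℝ) ≤ N := by push_cast; exact hbN
  refine ⟨2 * b, hbN', far_bound h hq hsep (by omega) hbN', b / 2, b, Nat.div_le_self _ _,
    by omega, ?_, fun m hm1 hm2 => ?_⟩
  · have hu1 : ((b / 2 : ℕ) : ℝ) * 2 ≤ b := by exact_mod_cast Nat.div_mul_le_self _ _
    have : (0 : ℝ) ≤ b := by positivity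
    push_cast
    linarith
  · obtain ⟨hD, hK, ht, hN0, hNt, hκ, htκ, hbig⟩ := h
    have hm2' : (m : ℝ) ≤ b := by exact_mod_cast hm2
    have hb0 : (0 : ℝ) ≤ b := by positivity
    have h1 := hD m (by nlinarith)
    rw [hitCount_eq_zero H m (fun i hi => hno i (by omega)), Nat.cast_zero, sub_zero] at h1
    have h1 := abs_le.1 h1
    have hm1' : (b : ℝ) ≤ 2 * m + 1 := by exact_mod_cast (by omega : b ≤ 2 * m + 1)
    have h2 : (N / 4 - 1) * t ≤ m * t := mul_le_mul_of_nonneg_right (by linarith) ht.le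
    refine lt_of_lt_of_le ?_ (le_abs_self _)
    nlinarith [h1.1]

/-- Forward or backward time works. `H` records the hits at times `0, 1, 2, …` and `H'` those at
times `-1, -2, …`, so `i + j + 1` in `hgap` is the time between a forward and a backward hit. If
neither direction worked, there would be hits in both directions up to time `N` but none within
`2 q` of the origin, and `hgap` applied to the last negative hit contradicts `(3 N + 1) t < 1`. -/
theorem two_sided {D D' : ℕ → ℝ} {H H' : ℕ → Prop} {t N K κ : ℝ} (h : Approx D H t N K κ)
    (h' : Approx D' H' t N K κ) {q : ℕ} (hq : 0 < q)
    (hsep : ∀ i j, H i → H j → i < j → i + q ≤ j)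
    (hsep' : ∀ i j, H' i → H' j → i < j → i + q ≤ j)
    (hgap : ∀ i j, H i → H' j → q ≤ j → ¬ H' (j - q) → 3 * q ≤ i + j →
      1 < ((i : ℝ) + (j + 1) + q) * t) :
    OneSided D N K κ ∨ OneSided D' N K κ := by
  classical
  by_contra hcon
  push Not at hcon
  obtain ⟨hc, hc'⟩ := hcon
  have hN0 := h.N_nonneg
  set b := min (2 * q) ⌊N / 2⌋₊ with hb
  have hb2 : b ≤ 2 * q := min_le_left _ _
  have hfl : (⌊N / 2⌋₊ : ℝ) ≤ N / 2 := Nat.floor_le (by positivity)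
  have hfl2 := Nat.lt_floor_add_one (N / 2)
  have hbN : 2 * (b : ℝ) ≤ N := by
    have : (b : ℝ) ≤ ⌊N / 2⌋₊ := by exact_mod_cast min_le_right _ _
    linarith
  have hno : ∀ i < b, ¬ H i := fun i hib hi => hc (oneSided_of_hit h hq hsep hb2 hbN hib hi)
  have hno' : ∀ i < b, ¬ H' i := fun i hib hi =>
    hc' (oneSided_of_hit h' hq hsep' hb2 hbN hib hi)
  rcases min_cases (2 * q) ⌊N / 2⌋₊ with ⟨hbq, _⟩ | ⟨hbq, _⟩
  · have hbq : b = 2 * q := hbq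
    have hex : ∃ i : ℕ, (i : ℝ) ≤ N ∧ H i := by
      by_contra hne
      push Not at hne
      exact hc (oneSided_of_no_hit h hne)
    have hex' : ∃ i : ℕ, (i : ℝ) ≤ N ∧ H' i := by
      by_contra hne
      push Not at hne
      exact hc' (oneSided_of_no_hit h' hne)
    obtain ⟨i, hiN, hi⟩ := hex
    have hjN := (Nat.find_spec hex').1
    have hj := (Nat.find_spec hex').2
    have hjmin : ∀ k < Nat.find hex', ¬ H' k := fun k hk hHk =>
      Nat.find_min hex' hk ⟨le_trans (by exact_mod_cast hk.le) hjN, hHk⟩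
    generalize Nat.find hex' = j at hjN hj hjmin
    have hib : b ≤ i := by by_contra hlt; exact hno i (by omega) hi
    have hjb : b ≤ j := by by_contra hlt; exact hno' j (by omega) hj
    have h1 := hgap i j hi hj (by omega) (hjmin _ (by omega)) (by omega)
    have hqN : (q : ℝ) ≤ N := by
      rw [hbq] at hbN; push_cast at hbN
      have : (0 : ℝ) ≤ q := by positivity
      linarith
    have h2 : ((i : ℝ) + (j + 1) + q) * t ≤ (3 * N + 1) * t :=
      mul_le_mul_of_nonneg_right (by linarith) h.t_pos.le
    linarith [h.Nt_le, h.t_le, h.κ_le]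
  · have hbq : b = ⌊N / 2⌋₊ := hbq
    rw [← hbq] at hfl2
    exact hc (oneSided_of_half h hq hsep hb2 hbN (by linarith) hno)

/-! ### Hits of the rotation -/

/-- Two visits to `[1 - t, 1)` whose times differ by `G` force `‖G α‖ < t`. -/
theorem hit_sep {α t z : ℝ} {G : ℕ}
    (h1 : 1 - t ≤ Int.fract z) (h2 : 1 - t ≤ Int.fract (z + G * α)) :
    ∃ p : ℤ, |(G : ℝ) * α - p| < t := by
  refine ⟨⌊z + G * α⌋ - ⌊z⌋, ?_⟩
  have e1 := Int.floor_add_fract z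
  have e2 := Int.floor_add_fract (z + G * α)
  have l1 := Int.fract_lt_one z
  have l2 := Int.fract_lt_one (z + G * α)
  push_cast
  rw [abs_lt]
  constructor <;> linarith

/-- The gap estimate. If `‖q α‖ < t` and an orbit visits `[1 - t, 1)` at times `0` and `G ≥ q` but
not at time `q`, then `(G + q) t > 1`. With `e = q α - p` and `d = G α - p'` the displacements at
times `q` and `G`, the number `G e - q d = q p' - G p` is an integer, and it is nonzero because
`e` moves the point out of the arc while `d` does not; hence `1 ≤ |G e - q d| < (G + q) t`. -/
theorem hit_gap {α t z : ℝ} (ht1 : t < 1) {q G : ℕ} {p : ℤ}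
    (hp : |(q : ℝ) * α - p| < t) (hqG : q ≤ G) (hq : 0 < q)
    (h1 : 1 - t ≤ Int.fract z) (h2 : 1 - t ≤ Int.fract (z + G * α))
    (h3 : ¬ 1 - t ≤ Int.fract (z + q * α)) : 1 < ((G : ℝ) + q) * t := by
  have e1 := Int.floor_add_fract z
  have e2 := Int.floor_add_fract (z + G * α)
  have l1 := Int.fract_lt_one z
  have l2 := Int.fract_lt_one (z + G * α)
  obtain ⟨hp1, hp2⟩ := abs_lt.1 hp
  set e : ℝ := q * α - p with he
  set p' : ℤ := ⌊z + G * α⌋ - ⌊z⌋ with hp'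
  set d : ℝ := G * α - p' with hd
  have hdd : Int.fract (z + G * α) = Int.fract z + d := by
    rw [hd, hp']; push_cast; linarith
  have hout : ¬ (1 - t ≤ Int.fract z + e ∧ Int.fract z + e < 1) := by
    rintro ⟨ha, hb⟩
    apply h3
    have : z + q * α = Int.fract z + e + ((⌊z⌋ + p : ℤ) : ℝ) := by
      rw [he]; push_cast; linarith
    rw [this, Int.fract_add_intCast, Int.fract_eq_self.2 ⟨by linarith, hb⟩]
    exact ha
  rw [hdd] at h2 l2
  have hq0 : (0 : ℝ) < q := by exact_mod_cast hq
  have hqG' : (q : ℝ) ≤ G := by exact_mod_cast hqG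
  have hint : (G : ℝ) * e - q * d = ((q * p' - G * p : ℤ) : ℝ) := by
    rw [he, hd]; push_cast; ring
  have hd1 : -t < d := by linarith
  have hd2 : d < t := by linarith
  have hG0 : (0 : ℝ) < G := by linarith
  by_cases hcase : Int.fract z + e < 1
  · have hlow : Int.fract z + e < 1 - t := by
      by_contra hcon
      exact hout ⟨not_lt.1 hcon, hcase⟩
    have hpos : 0 < (q : ℝ) * d - G * e := by
      nlinarith [mul_pos hq0 (by linarith : 0 < d - e),
        mul_nonneg (sub_nonneg.2 hqG') (by linarith : 0 ≤ -e)]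
    have hone : (1 : ℝ) ≤ q * d - G * e := by
      have : (q : ℝ) * d - G * e = ((G * p - q * p' : ℤ) : ℝ) := by
        rw [he, hd]; push_cast; ring
      rw [this] at hpos ⊢
      exact_mod_cast Int.add_one_le_iff.2 (by exact_mod_cast hpos : (0 : ℤ) < G * p - q * p')
    nlinarith [mul_lt_mul_of_pos_left hd2 hq0,
      mul_lt_mul_of_pos_left (by linarith : -e < t) hG0]
  · have hpos : 0 < (G : ℝ) * e - q * d := by
      nlinarith [mul_pos hq0 (by linarith : 0 < e - d),
        mul_nonneg (sub_nonneg.2 hqG') (by linarith : 0 ≤ e)]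
    have hone : (1 : ℝ) ≤ G * e - q * d := by
      rw [hint] at hpos ⊢
      exact_mod_cast Int.add_one_le_iff.2 (by exact_mod_cast hpos : (0 : ℤ) < q * p' - G * p)
    nlinarith [mul_lt_mul_of_pos_left (by linarith : -d < t) hq0,
      mul_lt_mul_of_pos_left hp2 hG0]

open Classical in
/-- Shifting by `t` changes the fractional part by `t`, minus one on the arc `[1 - t, 1)`. -/
theorem fract_shift {t y : ℝ} (k : ℤ) (ht : 0 < t) (ht1 : t < 1) :
    Int.fract (y + t + k) - Int.fract y = t - if 1 - t ≤ Int.fract y then 1 else 0 := by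
  have e1 := Int.floor_add_fract y
  have l0 := Int.fract_nonneg y
  have l1 := Int.fract_lt_one y
  rw [Int.fract_add_intCast]
  split_ifs with h
  · have : y + t = (Int.fract y + t - 1) + ((⌊y⌋ + 1 : ℤ) : ℝ) := by push_cast; linarith
    rw [this, Int.fract_add_intCast, Int.fract_eq_self.2 ⟨by linarith, by linarith⟩]
    ring
  · have : y + t = (Int.fract y + t) + (⌊y⌋ : ℝ) := by linarith
    rw [this, Int.fract_add_intCast, Int.fract_eq_self.2 ⟨by linarith, by linarith⟩]
    ring

/-- The Birkhoff sum `f(x) + f(x + α) + ⋯ + f(x + (n-1) α)` over nonnegative times. -/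
noncomputable def posSum (α : ℝ) (f : ℝ → ℝ) (n : ℕ) (x : ℝ) : ℝ :=
  ∑ i ∈ Finset.range n, f (x + i * α)

theorem birkhoff_natCast (α : ℝ) (f : ℝ → ℝ) (n : ℕ) (x : ℝ) :
    birkhoff α f n x = posSum α f n x := by
  simp [birkhoff, posSum]

/-- Negative times for the rotation by `α` are positive times for the rotation by `-α`. -/
theorem birkhoff_neg_natCast (α : ℝ) (f : ℝ → ℝ) (n : ℕ) (x : ℝ) :
    birkhoff α f (-(n : ℤ)) x = -posSum (-α) f n (x - α) := by
  rcases Nat.eq_zero_or_pos n with rfl | hn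
  · simp [birkhoff, posSum]
  · rw [birkhoff, if_neg (by omega), posSum, ← Finset.sum_range_reflect]
    simp only [neg_neg, Int.toNat_natCast]
    congr 1
    refine Finset.sum_congr rfl fun i hi => ?_
    rw [Finset.mem_range] at hi
    congr 1
    rw [Nat.cast_sub (by omega), Nat.cast_sub (by omega)]
    push_cast
    ring

/-- The orbit point `y + i α` lies in the arc `[1 - t, 1)`, so that a shift by `t` crosses an
integer. -/
def Hit (α t y : ℝ) (i : ℕ) : Prop := 1 - t ≤ Int.fract (y + i * α)

/-- The difference of the Birkhoff sums along two orbits at distance `t`: smooth part, plus linear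
drift, minus the number of hits. -/
theorem posSum_sub {α c : ℝ} {f g : ℝ → ℝ} (hf : ∀ x, f x = g x + Int.fract x + c)
    {x y t : ℝ} {k : ℤ} (ht : 0 < t) (ht1 : t < 1) (hx : x = y + t + k) (n : ℕ) :
    posSum α f n x - posSum α f n y = (posSum α g n x - posSum α g n y)
      + (n * t - hitCount (Hit α t y) n) := by
  classical
  have : ∀ i : ℕ, f (x + i * α) - f (y + i * α) = (g (x + i * α) - g (y + i * α))
      + (t - if Hit α t y i then 1 else 0) := by
    intro i
    rw [hf, hf, Hit, ← fract_shift k ht ht1, show y + i * α + t + k = x + i * α by rw [hx]; ring]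
    ring
  rw [posSum, posSum, posSum, posSum, ← Finset.sum_sub_distrib,
    Finset.sum_congr rfl (fun i _ => this i), Finset.sum_add_distrib, Finset.sum_sub_distrib,
    Finset.sum_sub_distrib, hitCount, Finset.sum_boole]
  simp

/-- The roof is bounded away from `0`, although it is discontinuous: on `[0, 1]` its continuous
version `g(x) + x + c` is positive, its value at `1` being `f(0) + 1`. -/
theorem roof_inf_pos {g f : ℝ → ℝ} {c : ℝ} (hper : Function.Periodic g 1) (hg : Continuous g)
    (hf : ∀ x, f x = g x + Int.fract x + c) (hfpos : ∀ x, 0 < f x) :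
    0 < sInf (Set.range f) := by
  obtain ⟨z, hz, hmin⟩ := (isCompact_Icc (a := (0:ℝ)) (b := 1)).exists_isMinOn
    (Set.nonempty_Icc.2 zero_le_one)
    (f := fun x => g x + x + c) (by fun_prop)
  have hpos : 0 < g z + z + c := by
    rcases hz.2.lt_or_eq with h | h
    · have := hfpos z
      rwa [hf, Int.fract_eq_self.2 ⟨hz.1, h⟩] at this
    · have := hfpos 0
      rw [hf, Int.fract_zero] at this
      have h1 := hper 0
      rw [zero_add] at h1
      rw [h, h1]; linarith
  refine lt_of_lt_of_le hpos (le_csInf (Set.range_nonempty f) ?_)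
  rintro _ ⟨x, rfl⟩
  have h1 := hmin (a := Int.fract x) ⟨Int.fract_nonneg x, (Int.fract_lt_one x).le⟩
  have h2 : g (Int.fract x) = g x := by
    have := hper.sub_int_mul_eq (x := x) ⌊x⌋
    rwa [mul_one] at this
  simp only [Set.mem_ofPred_eq, h2] at h1
  rw [hf]; exact h1

/-- `two_sided` for the rotation, with `q` the least positive integer such that `‖q α‖ < t`. -/
theorem dichotomy {α t y : ℝ} {D D' : ℕ → ℝ} {N K κ : ℝ}
    (h : Approx D (Hit α t y) t N K κ) (h' : Approx D' (Hit (-α) t (y - α)) t N K κ) :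
    OneSided D N K κ ∨ OneSided D' N K κ := by
  classical
  have ht := h.t_pos
  have ht1 : t < 1 := by linarith [h.t_le, h.κ_le]
  have hex : ∃ q : ℕ, 0 < q ∧ ∃ p : ℤ, |(q : ℝ) * α - p| < t := by
    obtain ⟨n, hn⟩ := exists_nat_one_div_lt ht
    obtain ⟨k, hk, -, hk2⟩ := Real.exists_nat_abs_mul_sub_round_le α (Nat.succ_pos n)
    refine ⟨k, hk, _, lt_of_le_of_lt hk2 (lt_of_le_of_lt ?_ hn)⟩
    push_cast
    gcongr
    linarith
  obtain ⟨hq, p, hp⟩ := Nat.find_spec hex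
  have hmin : ∀ k : ℕ, 0 < k → (∃ p : ℤ, |(k : ℝ) * α - p| < t) → Nat.find hex ≤ k :=
    fun k hk hkp => Nat.find_min' hex ⟨hk, hkp⟩
  generalize Nat.find hex = q at hq hp hmin
  refine two_sided h h' hq ?_ ?_ ?_
  · intro i j hi hj hij
    have := hmin (j - i) (by omega) (hit_sep (z := y + i * α) hi (by
      have e : y + i * α + ((j - i : ℕ) : ℝ) * α = y + j * α := by
        rw [Nat.cast_sub hij.le]; ring
      rw [e]; exact hj))
    omega
  · intro i j hi hj hij
    have := hmin (j - i) (by omega) (hit_sep (z := y - α + j * -α) hj (by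
      have e : y - α + j * -α + ((j - i : ℕ) : ℝ) * α = y - α + i * -α := by
        rw [Nat.cast_sub hij.le]; ring
      rw [e]; exact hi))
    omega
  · intro i j hi hj hqj hnot hij
    have := hit_gap (z := y - α + j * -α) (G := i + (j + 1)) ht1 hp (by omega) hq hj
      (by
        have e : y - α + j * -α + ((i + (j + 1) : ℕ) : ℝ) * α = y + i * α := by
          push_cast; ring
        rw [e]; exact hi)
      (by
        have e : y - α + j * -α + (q : ℝ) * α = y - α + ((j - q : ℕ) : ℝ) * -α := by
          rw [Nat.cast_sub hqj]; ring
        rw [e]; exact hnot)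
    push_cast at this
    exact this

/-! ### Parabolic divergence -/

/-- Main proposition: for the von Neumann roof `f(x) = g(x) + {x} + c` with slope `1`,
`L = min{1, inf f}`, `M = max{1, sup f}` and `β ∈ (0,1]`, there is `δ₀ > 0` such that for all
`x, y` with `0 < ‖x-y‖ < δ₀` there is an integer interval `J = [a,b] ∩ ℤ` with:
(i) `0 ∈ J ⊂ [-β/(100M‖x-y‖), β/(100M‖x-y‖)]`;
(ii) `|f^{(m)}(x) - f^{(m)}(y)| < 50M/L` for all `m ∈ (10M/L)·J`;
(iii) there is an integer interval `U ⊂ J` with `|U| > |J|/10` on which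
`|f^{(m)}(x) - f^{(m)}(y)| > βL/(10⁶M²)`. -/
theorem parabolic_divergence_main_prop
    (α : ℝ) (hα : Irrational α)
    (g : ℝ → ℝ) (hper : Function.Periodic g 1) (hg : ContDiff ℝ 1 g)
    (hint : ∫ x in (0:ℝ)..1, g x = 0) (c : ℝ)
    (f : ℝ → ℝ) (hf : ∀ x, f x = g x + Int.fract x + c) (hfpos : ∀ x, 0 < f x)
    (L M : ℝ) (hL : L = min 1 (sInf (Set.range f))) (hM : M = max 1 (sSup (Set.range f)))
    (β : ℝ) (hβ : 0 < β) (hβ1 : β ≤ 1) :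
    ∃ δ₀ > 0, ∀ x y : ℝ, 0 < normT (x - y) → normT (x - y) < δ₀ →
      ∃ a b : ℤ, a ≤ 0 ∧ 0 ≤ b ∧
        -(β / (100 * M * normT (x - y))) ≤ (a : ℝ) ∧
        (b : ℝ) ≤ β / (100 * M * normT (x - y)) ∧
        (∀ m : ℤ, (10 * M / L) * (a : ℝ) ≤ (m : ℝ) → (m : ℝ) ≤ (10 * M / L) * (b : ℝ) →
          |birkhoff α f m x - birkhoff α f m y| < 50 * M / L) ∧
        (∃ u v : ℤ, a ≤ u ∧ u ≤ v ∧ v ≤ b ∧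
          ((Finset.Icc u v).card : ℝ) > ((Finset.Icc a b).card : ℝ) / 10 ∧
          ∀ m : ℤ, u ≤ m → m ≤ v →
            |birkhoff α f m x - birkhoff α f m y| > β * L / (10 ^ 6 * M ^ 2)) := by
  have hL0 : 0 < L := by
    rw [hL]; exact lt_min one_pos (roof_inf_pos hper hg.continuous hf hfpos)
  have hL1 : L ≤ 1 := hL ▸ min_le_left _ _
  have hM1 : 1 ≤ M := hM ▸ le_max_left _ _
  clear hL hM
  have hM0 : 0 < M := by linarith
  set K := M / L with hK
  set κ := β * L / (10 ^ 6 * M ^ 2) with hκ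
  have hκ0 : 0 < κ := by positivity
  have hK1 : 1 ≤ K := by rw [hK, le_div_iff₀ hL0]; linarith
  have hκ1 : κ ≤ 1 / 1000 := by
    rw [hκ, div_le_iff₀ (by positivity)]
    nlinarith [mul_le_one₀ hβ1 hL0.le hL1, one_le_pow₀ hM1 (n := 2)]
  obtain ⟨C₁, hC₁0, hC₁⟩ := smooth_part α hα g hper hg (κ * L) (by positivity)
  obtain ⟨C₂, hC₂0, hC₂⟩ := smooth_part (-α) hα.neg g hper hg (κ * L) (by positivity)
  set δ : ℝ := κ / (2 * (C₁ + C₂ + 1)) with hδ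
  have hδ0 : 0 < δ := by positivity
  have hδC : δ * (C₁ + C₂ + 1) = κ / 2 := by rw [hδ]; field_simp
  -- the displacement `x - y` is a small positive `t` modulo the integers
  have core : ∀ x y t : ℝ, ∀ k : ℤ, 0 < t → t < δ → x = y + t + k →
      OneSided (fun n => posSum α f n x - posSum α f n y) (β / (100 * M * t)) K κ ∨
      OneSided (fun n => posSum (-α) f n (x - α) - posSum (-α) f n (y - α))
        (β / (100 * M * t)) K κ := by
    intro x y t k ht htδ hx
    have htC : t * (C₁ + C₂ + 1) ≤ κ / 2 := by
      rw [← hδC]; exact mul_le_mul_of_nonneg_right htδ.le (by positivity)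
    have htC₁ : t * C₁ ≤ κ / 2 := by nlinarith
    have htC₂ : t * C₂ ≤ κ / 2 := by nlinarith
    have htκ : t ≤ κ := by nlinarith
    have ht1 : t < 1 := by linarith
    set N := β / (100 * M * t) with hN
    have hNt : N * t = β / (100 * M) := by rw [hN]; field_simp
    have hNt1 : N * t ≤ 1 / 100 := by
      rw [hNt, div_le_iff₀ (by positivity)]; linarith
    have hNt2 : N * t = 10 ^ 4 * κ * K := by rw [hNt, hκ, hK]; field_simp; norm_num
    have hsmall : ∀ (m : ℕ) (C : ℝ), t * C ≤ κ / 2 → (m : ℝ) ≤ 10 * K * N →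
        t * (κ * L * m + C) ≤ κ := by
      intro m C hC hm
      have hmt : (m : ℝ) * t ≤ 10 * K * (N * t) := by nlinarith
      have h1 : L * (10 * K * (N * t)) = β / 10 := by rw [hNt, hK]; field_simp; norm_num
      have h2 : κ * (L * (m * t)) ≤ κ * (β / 10) := by rw [← h1]; gcongr
      nlinarith
    have mk : ∀ (a : ℝ) (x y : ℝ), x = y + t + k →
        (∀ m : ℕ, (m : ℝ) ≤ 10 * K * N → |posSum a g m x - posSum a g m y| ≤ κ) →
        Approx (fun n => posSum a f n x - posSum a f n y) (Hit a t y) t N K κ := by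
      intro a x y hx hsm
      refine ⟨fun m hm => ?_, hK1, ht, by positivity, hNt1, hκ1, htκ, hNt2⟩
      rw [posSum_sub hf ht ht1 hx, add_sub_cancel_right]
      exact hsm m hm
    refine dichotomy (mk α x y hx fun m hm => ?_) (mk (-α) (x - α) (y - α) (by rw [hx]; ring)
      fun m hm => ?_)
    · exact (hC₁ m x y t k ht.le hx).trans (hsmall m C₁ htC₁ hm)
    · exact (hC₂ m _ _ t k ht.le (by rw [hx]; ring)).trans (hsmall m C₂ htC₂ hm)
  refine ⟨δ, hδ0, fun x y hpos hlt => ?_⟩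
  -- the conclusions only involve absolute values, so the sign of `x - y` does not matter
  have both : OneSided (fun n => posSum α f n x - posSum α f n y)
        (β / (100 * M * normT (x - y))) K κ ∨
      OneSided (fun n => posSum (-α) f n (x - α) - posSum (-α) f n (y - α))
        (β / (100 * M * normT (x - y))) K κ := by
    have hs : normT (x - y) = |x - y - round (x - y)| := rfl
    rcases le_total 0 (x - y - round (x - y)) with h | h
    · rw [abs_of_nonneg h] at hs
      exact core x y _ (round (x - y)) hpos hlt (by rw [hs]; ring)
    · rw [abs_of_nonpos h] at hs
      have := core y x _ (-round (x - y)) hpos hlt (by rw [hs]; push_cast; ring)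
      simpa only [OneSided, abs_sub_comm (posSum _ f _ y), abs_sub_comm (posSum _ f _ (y - α))]
        using this
  set N := β / (100 * M * normT (x - y)) with hN
  have hN0 : 0 ≤ N := by positivity
  have hMK : 10 * M / L = 10 * K := by rw [hK]; ring
  have hMK' : 50 * M / L = 50 * K := by rw [hK]; ring
  rw [hMK, hMK']
  rcases both with ⟨b, hbN, hfar, u, v, huv, hvb, hcard, hU⟩ |
    ⟨b, hbN, hfar, u, v, huv, hvb, hcard, hU⟩
  · refine ⟨0, b, le_rfl, by positivity, by simpa using hN0, by simpa using hbN, ?_,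
      u, v, by positivity, by exact_mod_cast huv, by exact_mod_cast hvb, ?_, ?_⟩
    · intro m hm1 hm2
      have hm0 : 0 ≤ m := by
        have : (0 : ℝ) ≤ m := by simpa using hm1
        exact_mod_cast this
      lift m to ℕ using hm0
      rw [birkhoff_natCast, birkhoff_natCast]
      exact hfar m (by simpa using hm2)
    · rw [Int.card_Icc, Int.card_Icc, show ((v : ℤ) + 1 - u).toNat = v + 1 - u by omega,
        show ((b : ℤ) + 1 - 0).toNat = b + 1 by omega, Nat.cast_sub (by omega)]
      push_cast
      linarith
    · intro m hm1 hm2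
      lift m to ℕ using by omega
      rw [birkhoff_natCast, birkhoff_natCast]
      exact hU m (by omega) (by omega)
  · have hflip : ∀ n : ℕ, |birkhoff α f (-(n : ℤ)) x - birkhoff α f (-(n : ℤ)) y|
        = |posSum (-α) f n (x - α) - posSum (-α) f n (y - α)| := fun n => by
      rw [birkhoff_neg_natCast, birkhoff_neg_natCast, ← abs_neg]
      congr 1
      ring
    refine ⟨-b, 0, by simp, le_rfl, by simpa using hbN, by simpa using hN0, ?_,
      -v, -u, by omega, by omega, by omega, ?_, ?_⟩
    · intro m hm1 hm2
      have hm0 : m ≤ 0 := by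
        have : (m : ℝ) ≤ 0 := by simpa using hm2
        exact_mod_cast this
      obtain ⟨n, rfl⟩ : ∃ n : ℕ, m = -(n : ℤ) := ⟨(-m).toNat, by omega⟩
      rw [hflip]
      push_cast at hm1
      exact hfar n (by linarith)
    · rw [Int.card_Icc, Int.card_Icc, show (-(u : ℤ) + 1 - -v).toNat = v + 1 - u by omega,
        show (0 + 1 - -(b : ℤ)).toNat = b + 1 by omega, Nat.cast_sub (by omega)]
      push_cast
      linarith
    · intro m hm1 hm2
      obtain ⟨n, rfl⟩ : ∃ n : ℕ, m = -(n : ℤ) := ⟨(-m).toNat, by omega⟩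
      rw [hflip]
      exact hU n (by omega) (by omega)
end

section
/- Let α be irrational with continued fraction denominators (q_n), g : 𝕋 → ℝ a C¹ function with ∫_𝕋 g dm_𝕋 = 0, c ∈ ℝ, f(x) = g(x) + {x} + c with f > 0, L = min{1, inf_𝕋 f}, M = max{1, sup_𝕋 f}, β ∈ (0,1]. Let x, y ∈ 𝕋 satisfy β/(200Mq_{n+1}) < ‖x−y‖ ≤ β/(200Mq_n) for some n ≥ 1, and assume that |g^{(m)}(x) − g^{(m)}(y)| ≤ max{1, |m|·‖x−y‖} for all m ∈ ℤ. Then for every integer m with 0 ≤ m ≤ (20M/L)·q_n one has |f^{(m)}(x) − f^{(m)}(y)| < 50M/L. -/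
/-- `qden α n` is the denominator `q_n` of the `n`-th convergent of the continued fraction
expansion of `α`:  `q₀ = 1`, `q₁ = a₁`, `q_n = a_n q_{n-1} + q_{n-2}`. -/
noncomputable def qden (α : ℝ) (n : ℕ) : ℝ := (GenContFract.of α).dens n

/-! ### Continued fractions -/

theorem not_terminatedAt (α : ℝ) (hα : Irrational α) (n : ℕ) :
    ¬ (GenContFract.of α).TerminatedAt n := fun h => by
  obtain ⟨q, hq⟩ := (GenContFract.terminates_iff_rat α).1 ⟨n, h⟩
  exact hα ⟨q, hq.symm⟩

open GenContFract in
/-- The continuants of a continued fraction are integers. -/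
theorem contsAux_int (α : ℝ) (hα : Irrational α) (n : ℕ) :
    ∃ A B : ℤ, ((GenContFract.of α).contsAux n).a = A ∧
      ((GenContFract.of α).contsAux n).b = B := by
  induction n using Nat.strong_induction_on with
  | _ n ih =>
    match n, ih with
    | 0, _ => exact ⟨1, 0, by simp [contsAux], by simp [contsAux]⟩
    | 1, _ => exact ⟨⌊α⌋, 1, by simp [contsAux], by simp [contsAux]⟩
    | n + 2, ih =>
      obtain ⟨A, B, hA, hB⟩ := ih n (by omega)
      obtain ⟨A', B', hA', hB'⟩ := ih (n + 1) (by omega)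
      have hnt := not_terminatedAt α hα n
      obtain ⟨gp, hgp⟩ := Option.ne_none_iff_exists'.1 hnt
      obtain ⟨h1, z, hz⟩ := of_partNum_eq_one_and_exists_int_partDen_eq hgp
      rw [contsAux_recurrence hgp rfl rfl]
      refine ⟨z * A' + A, z * B' + B, ?_, ?_⟩ <;> simp [h1, hz, hA, hB, hA', hB']

theorem one_le_qden (α : ℝ) (hα : Irrational α) (n : ℕ) : 1 ≤ qden α n := by
  have h := GenContFract.succ_nth_fib_le_of_nth_den (v := α) (n := n)
    (Or.inr (not_terminatedAt α hα _))
  have h1 : 1 ≤ Nat.fib (n + 1) := Nat.fib_pos.2 (by omega)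
  have h2 : (1 : ℝ) ≤ Nat.fib (n + 1) := by exact_mod_cast h1
  exact h2.trans h

/-- The multiples `iα` with `0 < i ≤ q_n / 2` stay at distance at least `1 / (2 q_n)` from the
integers: `i p_n / q_n` is a non-integer multiple of `1 / q_n`, and replacing `p_n / q_n` by `α`
moves it by at most `i / (q_n q_{n+1}) ≤ 1 / (2 q_n)`. -/
theorem abs_mul_sub_ge (α : ℝ) (hα : Irrational α) (n : ℕ) (i p : ℤ) (hi : 0 < i)
    (hi2 : 2 * (i : ℝ) ≤ qden α n) : 1 / (2 * qden α n) ≤ |i * α - p| := by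
  obtain ⟨A, B, hA, hB⟩ := contsAux_int α hα (n + 1)
  obtain ⟨A', B', hA', hB'⟩ := contsAux_int α hα (n + 2)
  have hnt := not_terminatedAt α hα n
  have hdet := SimpContFract.determinant (s := SimpContFract.of α) (n := n) hnt
  have happ := GenContFract.abs_sub_convs_le hnt
  have hmono : qden α n ≤ qden α (n + 1) := GenContFract.of_den_mono
  have hq1 := one_le_qden α hα n
  rw [GenContFract.conv_eq_num_div_den] at happ
  have eA : (GenContFract.of α).nums n = A := hA
  have eA' : (GenContFract.of α).nums (n + 1) = A' := hA'
  have eB : (GenContFract.of α).dens n = B := hB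
  have eB' : (GenContFract.of α).dens (n + 1) = B' := hB'
  change (GenContFract.of α).nums n * (GenContFract.of α).dens (n + 1) -
    (GenContFract.of α).dens n * (GenContFract.of α).nums (n + 1) = _ at hdet
  rw [eA, eA', eB, eB'] at hdet
  rw [eA, eB, eB'] at happ
  have qB : qden α n = B := eB
  have qB' : qden α (n + 1) = B' := eB'
  rw [qB] at hi2 hmono hq1 ⊢
  rw [qB'] at hmono
  have hdetZ : A * B' - B * A' = (-1) ^ (n + 1) := by exact_mod_cast hdet
  have hcop : IsCoprime B A := by
    rcases neg_one_pow_eq_or ℤ (n + 1) with h | h <;> rw [h] at hdetZ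
    · exact ⟨-A', B', by linarith⟩
    · exact ⟨A', -B', by linarith⟩
  have hi2' : 2 * i ≤ B := by exact_mod_cast hi2
  have hne : i * A - p * B ≠ 0 := fun h => by
    have hdvd : B ∣ i * A := ⟨p, by linarith⟩
    have := Int.le_of_dvd hi (hcop.dvd_of_dvd_mul_right hdvd)
    omega
  have hge : (1 : ℝ) ≤ |(i : ℝ) * A - p * B| := by
    exact_mod_cast Int.one_le_abs hne
  have hBpos : (0 : ℝ) < B := by linarith
  have hB'pos : (0 : ℝ) < B' := by linarith
  have hiR : (0 : ℝ) < i := by exact_mod_cast hi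
  have e1 : (i : ℝ) * A - p * B = B * (i * α - p) - i * (B * (α - A / B)) := by
    field_simp
    ring
  have e2 : |(i : ℝ) * (B * (α - A / B))| ≤ 1 / 2 := by
    rw [abs_mul, abs_mul, abs_of_pos hiR, abs_of_pos hBpos]
    calc (i : ℝ) * (B * |α - A / B|) ≤ i * (B * (1 / (B * B'))) := by gcongr
      _ = i / B' := by field_simp
      _ ≤ 1 / 2 := by rw [div_le_div_iff₀ hB'pos two_pos]; linarith
  rw [e1] at hge
  have h3 := abs_sub (B * ((i : ℝ) * α - p)) (i * (B * (α - A / B)))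
  rw [abs_mul, abs_of_pos hBpos] at h3
  rw [div_le_iff₀ (by positivity)]
  linarith

/-! ### The sawtooth function and counting -/

/-- A translation by `ε` modulo `1` changes the fractional part by exactly `ε` unless an integer
lies between `w` and `w + ε`. -/
theorem fract_diff (w ε : ℝ) (k : ℤ) (hε : |ε| ≤ 1 / 2) :
    Int.fract (w + k + ε) - Int.fract w = ε ∨
      (|Int.fract (w + k + ε) - Int.fract w - ε| ≤ 1 ∧ ∃ l : ℤ, |w - l| ≤ |ε|) := by
  have e : Int.fract (w + k + ε) = Int.fract (w + ε) := by
    rw [show w + k + ε = w + ε + k by ring, Int.fract_add_intCast]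
  rw [e]
  have h1 := Int.self_sub_floor w
  have h2 := Int.self_sub_floor (w + ε)
  have b1 := Int.fract_nonneg w
  have b2 := Int.fract_lt_one w
  have b3 := Int.fract_nonneg (w + ε)
  have b4 := Int.fract_lt_one (w + ε)
  obtain ⟨c1, c2⟩ := abs_le.1 hε
  rcases lt_trichotomy ⌊w + ε⌋ ⌊w⌋ with h | h | h
  · have h' : (⌊w + ε⌋ : ℝ) + 1 ≤ ⌊w⌋ := by exact_mod_cast h
    have h'' : ⌊w⌋ < ⌊w + ε⌋ + 2 := by
      have : (⌊w⌋ : ℝ) < ⌊w + ε⌋ + 2 := by linarith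
      exact_mod_cast this
    have h3 : (⌊w⌋ : ℝ) ≤ ⌊w + ε⌋ + 1 := by
      exact_mod_cast (by omega : ⌊w⌋ ≤ ⌊w + ε⌋ + 1)
    refine Or.inr ⟨abs_le.2 ⟨by linarith, by linarith⟩, ⌊w⌋, ?_⟩
    rw [abs_of_nonneg (by linarith)]
    have := neg_le_abs ε
    linarith
  · left
    rw [h] at h2
    linarith
  · have h' : (⌊w⌋ : ℝ) + 1 ≤ ⌊w + ε⌋ := by exact_mod_cast h
    have h'' : ⌊w + ε⌋ < ⌊w⌋ + 2 := by
      have : (⌊w + ε⌋ : ℝ) < ⌊w⌋ + 2 := by linarith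
      exact_mod_cast this
    have h3 : (⌊w + ε⌋ : ℝ) ≤ ⌊w⌋ + 1 := by
      exact_mod_cast (by omega : ⌊w + ε⌋ ≤ ⌊w⌋ + 1)
    refine Or.inr ⟨abs_le.2 ⟨by linarith, by linarith⟩, ⌊w + ε⌋, ?_⟩
    rw [abs_of_nonpos (by linarith)]
    have := le_abs_self ε
    linarith

theorem card_le_of_separated (S : Finset ℕ) (m : ℕ) (D : ℝ) (hD : 0 < D)
    (hS : S ⊆ Finset.range m) (hsep : ∀ i ∈ S, ∀ j ∈ S, i < j → D ≤ (j : ℝ) - i) :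
    (S.card : ℝ) ≤ m / D + 1 := by
  -- the map `i ↦ ⌊i / D⌋` is injective on `S`
  have hcard : S.card ≤ (Finset.range (⌊(m : ℝ) / D⌋₊ + 1)).card := by
    have key : ∀ i ∈ S, ∀ j ∈ S, i < j → ⌊(i : ℝ) / D⌋₊ ≠ ⌊(j : ℝ) / D⌋₊ := by
      intro i hi j hj hij h
      have h1 := Nat.lt_floor_add_one ((j : ℝ) / D)
      have h2 := Nat.floor_le (show (0 : ℝ) ≤ (i : ℝ) / D by positivity)
      rw [← h] at h1
      have h3 : (j : ℝ) / D - i / D < 1 := by linarith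
      rw [← sub_div, div_lt_one hD] at h3
      linarith [hsep i hi j hj hij]
    refine Finset.card_le_card_of_injOn (fun i : ℕ => ⌊(i : ℝ) / D⌋₊) ?_ ?_
    · intro i hi
      have him : i < m := Finset.mem_range.1 (hS hi)
      have : ⌊(i : ℝ) / D⌋₊ ≤ ⌊(m : ℝ) / D⌋₊ := by
        apply Nat.floor_mono
        gcongr
      simp only [Finset.coe_range, Set.mem_Iio]
      omega
    · intro i hi j hj h
      rcases lt_trichotomy i j with hij | hij | hij
      · exact absurd h (key i hi j hj hij)
      · exact hij
      · exact absurd h.symm (key j hj i hi hij)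
  rw [Finset.card_range] at hcard
  have h1 : (S.card : ℝ) ≤ ⌊(m : ℝ) / D⌋₊ + 1 := by exact_mod_cast hcard
  have h2 := Nat.floor_le (show (0 : ℝ) ≤ (m : ℝ) / D by positivity)
  linarith

/-- The set of values of `f` stays away from `0`; this is what makes `L` positive. -/
theorem sInf_range_pos (g f : ℝ → ℝ) (hper : Function.Periodic g 1) (hg : Continuous g) (c : ℝ)
    (hf : ∀ x, f x = g x + Int.fract x + c) (hfpos : ∀ x, 0 < f x) :
    0 < sInf (Set.range f) := by
  -- minimize the continuous function that equals `f` on `[0,1)` and its left limit at `1`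
  obtain ⟨z, hz, hmin⟩ := (isCompact_Icc (a := (0 : ℝ)) (b := 1)).exists_isMinOn
    ⟨0, by simp⟩ (f := fun x => g x + x + c) (by fun_prop)
  have hzpos : 0 < g z + z + c := by
    rcases hz.2.lt_or_eq with h | h
    · have := hfpos z
      rwa [hf, Int.fract_eq_self.2 ⟨hz.1, h⟩] at this
    · have h0 := hfpos 0
      rw [hf, Int.fract_zero] at h0
      have h1 : g 1 = g 0 := by simpa using hper 0
      rw [h, h1]
      linarith
  refine hzpos.trans_le (le_csInf (Set.range_nonempty f) ?_)
  rintro _ ⟨w, rfl⟩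
  have h1 : g (Int.fract w) = g w := by
    have := hper.sub_int_mul_eq (x := w) ⌊w⌋
    rwa [mul_one, Int.self_sub_floor] at this
  have h2 := hmin (show Int.fract w ∈ Set.Icc (0 : ℝ) 1 from
    ⟨Int.fract_nonneg w, (Int.fract_lt_one w).le⟩)
  simp only [Set.mem_ofPred_eq, h1] at h2
  rw [hf]
  exact h2

/-! ### The estimate for the cocycle -/

/-- The sawtooth part of the estimate: the exceptional times `i < m` are those at which `y + iα`
lies close to an integer. -/
theorem sawtooth_bound (α : ℝ) (hα : Irrational α) (x y : ℝ) (n m : ℕ)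
    (hd : normT (x - y) ≤ 1 / (200 * qden α n)) :
    |∑ i ∈ Finset.range m, (Int.fract (x + (i : ℕ) * α) - Int.fract (y + (i : ℕ) * α))|
      ≤ m * normT (x - y) + (2 * m / qden α n + 1) := by
  classical
  have hq := one_le_qden α hα n
  have hq0 : 0 < qden α n := by linarith
  set ε := x - y - round (x - y) with hε
  have hδ : normT (x - y) = |ε| := rfl
  rw [hδ] at hd ⊢
  have hε2 : |ε| ≤ 1 / 2 := abs_sub_round (x - y)
  have hx : ∀ i : ℕ, x + i * α = (y + i * α) + (round (x - y) : ℤ) + ε := fun i => by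
    rw [hε]; ring
  set d : ℕ → ℝ := fun i => Int.fract (x + (i : ℕ) * α) - Int.fract (y + (i : ℕ) * α) with hdd
  have hdi : ∀ i, d i = ε ∨ (|d i - ε| ≤ 1 ∧ ∃ l : ℤ, |y + i * α - l| ≤ |ε|) := fun i => by
    have := fract_diff (y + i * α) ε (round (x - y)) hε2
    rwa [← hx i] at this
  set S := (Finset.range m).filter (fun i => d i ≠ ε) with hS
  have hcard : (S.card : ℝ) ≤ m / (qden α n / 2) + 1 := by
    refine card_le_of_separated S m _ (by linarith) (Finset.filter_subset _ _) ?_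
    intro i hi j hj hij
    obtain ⟨-, l, hl⟩ := (hdi i).resolve_left (Finset.mem_filter.1 hi).2
    obtain ⟨-, l', hl'⟩ := (hdi j).resolve_left (Finset.mem_filter.1 hj).2
    by_contra! hlt
    have hge := abs_mul_sub_ge α hα n ((j : ℤ) - i) (l' - l) (by omega)
      (by push_cast; linarith)
    push_cast at hge
    have e : ((j : ℝ) - i) * α - (l' - l) = (y + j * α - l') - (y + i * α - l) := by ring
    rw [e] at hge
    have h3 := abs_sub (y + j * α - l') (y + i * α - l)
    have h4 : 1 / (2 * qden α n) = 100 * (1 / (200 * qden α n)) := by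
      field_simp
      norm_num
    have h5 : 0 < 1 / (200 * qden α n) := by positivity
    linarith
  have hsum : ∑ i ∈ Finset.range m, d i = m * ε + ∑ i ∈ Finset.range m, (d i - ε) := by
    rw [Finset.sum_sub_distrib (f := d) (g := fun _ => ε), Finset.sum_const, Finset.card_range,
      nsmul_eq_mul]
    ring
  have hsum2 : |∑ i ∈ Finset.range m, (d i - ε)| ≤ S.card := by
    refine (Finset.abs_sum_le_sum_abs _ _).trans ?_
    rw [hS, Finset.card_filter]
    push_cast
    refine Finset.sum_le_sum fun i _ => ?_
    by_cases h : d i = ε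
    · simp [h]
    · simpa [h] using ((hdi i).resolve_left h).1
  rw [hsum]
  refine (abs_add_le _ _).trans ?_
  rw [abs_mul, Nat.abs_cast]
  have : (m : ℝ) / (qden α n / 2) = 2 * m / qden α n := by field_simp
  linarith

/-- Case (A), upper bound: if `β/(200Mq_{n+1}) < ‖x-y‖ ≤ β/(200Mq_n)` and the `C¹` part
satisfies `|g^{(m)}(x) - g^{(m)}(y)| ≤ max{1, |m|‖x-y‖}` for all `m`, then for all
`0 ≤ m ≤ (20M/L)q_n` one has `|f^{(m)}(x) - f^{(m)}(y)| < 50M/L`. -/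
theorem caseA_cocycle_upper_bound
    (α : ℝ) (hα : Irrational α)
    (g : ℝ → ℝ) (hper : Function.Periodic g 1) (hg : ContDiff ℝ 1 g)
    (hint : ∫ x in (0:ℝ)..1, g x = 0) (c : ℝ)
    (f : ℝ → ℝ) (hf : ∀ x, f x = g x + Int.fract x + c) (hfpos : ∀ x, 0 < f x)
    (L M : ℝ) (hL : L = min 1 (sInf (Set.range f))) (hM : M = max 1 (sSup (Set.range f)))
    (β : ℝ) (hβ : 0 < β) (hβ1 : β ≤ 1)
    (x y : ℝ) (n : ℕ) (hn : 1 ≤ n)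
    (hd1 : β / (200 * M * qden α (n + 1)) < normT (x - y))
    (hd2 : normT (x - y) ≤ β / (200 * M * qden α n))
    (hgxy : ∀ m : ℤ, |birkhoff α g m x - birkhoff α g m y|
      ≤ max 1 (|(m : ℝ)| * normT (x - y))) :
    ∀ m : ℕ, (m : ℝ) ≤ (20 * M / L) * qden α n →
      |birkhoff α f m x - birkhoff α f m y| < 50 * M / L := by
  intro m hm
  have hL0 : 0 < L := by
    rw [hL]
    exact lt_min one_pos (sInf_range_pos g f hper hg.continuous c hf hfpos)
  have hL1 : L ≤ 1 := hL ▸ min_le_left _ _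
  have hM1 : 1 ≤ M := hM ▸ le_max_left _ _
  have hq := one_le_qden α hα n
  have hq0 : 0 < qden α n := by linarith
  have hM0 : 0 < M := by linarith
  have hδ0 : 0 ≤ normT (x - y) := abs_nonneg _
  have hd : normT (x - y) ≤ 1 / (200 * qden α n) := by
    refine hd2.trans ?_
    rw [div_le_div_iff₀ (by positivity) (by positivity)]
    have : β * qden α n ≤ M * qden α n := by gcongr; linarith
    linarith
  have hsaw := sawtooth_bound α hα x y n m hd
  have hgm := hgxy m
  rw [Int.cast_natCast, Nat.abs_cast] at hgm
  have hdecomp : birkhoff α f m x - birkhoff α f m y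
      = (birkhoff α g m x - birkhoff α g m y) +
        ∑ i ∈ Finset.range m, (Int.fract (x + (i : ℕ) * α) - Int.fract (y + (i : ℕ) * α)) := by
    simp only [birkhoff, Int.natCast_nonneg, if_true, Int.toNat_natCast, hf,
      Finset.sum_add_distrib, Finset.sum_sub_distrib]
    ring
  -- `m ‖x - y‖ ≤ (20 M q_n / L) · β / (200 M q_n) ≤ 1 / (10 L)`
  have hmδ : m * normT (x - y) ≤ 1 / 10 * (1 / L) := by
    calc m * normT (x - y) ≤ (20 * M / L * qden α n) * (β / (200 * M * qden α n)) := by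
          gcongr
      _ = β / 10 * (1 / L) := by field_simp; norm_num
      _ ≤ 1 / 10 * (1 / L) := by gcongr
  have hcount : 2 * m / qden α n ≤ 40 * (M / L) := by
    rw [div_le_iff₀ hq0]
    have : 40 * (M / L) * qden α n = 2 * (20 * M / L * qden α n) := by ring
    linarith
  have hmax : max 1 (m * normT (x - y)) ≤ 1 + m * normT (x - y) :=
    max_le (by linarith [mul_nonneg (Nat.cast_nonneg (α := ℝ) m) hδ0]) (by linarith)
  have hL2 : 1 ≤ 1 / L := by rw [le_div_iff₀ hL0]; linarith
  have hML : 1 / L ≤ M / L := by gcongr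
  rw [hdecomp, mul_div_assoc]
  have := abs_add_le (birkhoff α g m x - birkhoff α g m y)
    (∑ i ∈ Finset.range m, (Int.fract (x + (i : ℕ) * α) - Int.fract (y + (i : ℕ) * α)))
  linarith
end
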